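/- There exists a constant C > 0 such that for every dimension d ≥ 2 and all natural numbers k, n with k < n/2, the minimal k-dispersion satisfies k-disp*(n,d) ≤ C · max{ log₂(n) · √(log₂(d)/n) , k · log₂(n/k)/n }. -/

import Mathlib

open MeasureTheory Finset
open scoped Classical

noncomputable section

/-- The `k`-dispersion of a finite point set `P ⊆ [0,1]^d`: the supremum of the volumes of
axis-parallel boxes inside `[0,1]^d` containing at most `k` points of `P`. -/
def kdisp (d k : ℕ) (P : Finset (Fin d → ℝ)) : ℝ :=
  sSup { v : ℝ | ∃ a b : Fin d → ℝ,
    (∀ i, 0 ≤ a i ∧ a i ≤ b i ∧ b i ≤ 1) ∧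
    (P.filter (fun x => ∀ i, x i ∈ Set.Ioo (a i) (b i))).card ≤ k ∧
    v = ∏ i, (b i - a i) }

/-- The minimal `k`-dispersion over all `n`-point subsets of `[0,1]^d`. -/
def kdispStar (d k n : ℕ) : ℝ :=
  sInf { v : ℝ | ∃ P : Finset (Fin d → ℝ),
    (∀ x ∈ P, ∀ i, x i ∈ Set.Icc (0:ℝ) 1) ∧ P.card = n ∧ v = kdisp d k P }

/-!
To bound the dispersion by `r`, subdivide every axis into `M + 2` intervals of equal length, with
`M ≈ 4 / r`, and place the `n` points at random in the `M ^ d` grid cells that do not touch the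
boundary of the cube. A box of volume at least `r` has at most `(M + 2) log (1 / r)` sides of
length at most `1 - 1 / (M + 2)`; every other side imposes no condition on the cells, since it can
only miss boundary cells. Hence the cells inside large boxes form at most
`(d (M + 3) ^ 2) ^ ((M + 2) log (1 / r))` sets, each of density at least `r / 2`, and a union
bound shows that some placement hits all of them more than `k` times.
-/

section ProductInequalities

variable {ι : Type*}

theorem one_add_sum_le_prod_one_add {s : Finset ι} {y : ι → ℝ} (hy : ∀ i ∈ s, 0 ≤ y i) :
    1 + ∑ i ∈ s, y i ≤ ∏ i ∈ s, (1 + y i) := by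
  induction s using Finset.cons_induction with
  | empty => simp
  | cons a s ha ih =>
    rw [forall_mem_cons] at hy
    have hsum : 0 ≤ ∑ i ∈ s, y i := sum_nonneg hy.2
    rw [sum_cons, prod_cons]
    nlinarith [ih hy.2]

theorem one_sub_sum_le_prod_one_sub {s : Finset ι} {y : ι → ℝ} (hy₀ : ∀ i ∈ s, 0 ≤ y i)
    (hy₁ : ∀ i ∈ s, y i ≤ 1) : 1 - ∑ i ∈ s, y i ≤ ∏ i ∈ s, (1 - y i) := by
  induction s using Finset.cons_induction with
  | empty => simp
  | cons a s ha ih =>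
    rw [forall_mem_cons] at hy₀ hy₁
    have hsum : 0 ≤ ∑ i ∈ s, y i := sum_nonneg hy₀.2
    rw [sum_cons, prod_cons]
    nlinarith [mul_le_mul_of_nonneg_left (ih hy₀.2 hy₁.2) (sub_nonneg.2 hy₁.1)]

theorem sum_inv_sub_one_le_inv_prod {s : Finset ι} {l : ι → ℝ} (hl₀ : ∀ i ∈ s, 0 < l i)
    (hl₁ : ∀ i ∈ s, l i ≤ 1) : ∑ i ∈ s, ((l i)⁻¹ - 1) ≤ (∏ i ∈ s, l i)⁻¹ := by
  have h := one_add_sum_le_prod_one_add (s := s) (y := fun i ↦ (l i)⁻¹ - 1)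
    fun i hi ↦ sub_nonneg.2 ((one_le_inv₀ (hl₀ i hi)).2 (hl₁ i hi))
  simp only [add_sub_cancel, prod_inv_distrib] at h
  linarith

theorem sum_one_sub_le_log_inv {s : Finset ι} {l : ι → ℝ} {r : ℝ} (hr : 0 < r)
    (hl₀ : ∀ i ∈ s, 0 ≤ l i) (hl : r ≤ ∏ i ∈ s, l i) :
    ∑ i ∈ s, (1 - l i) ≤ Real.log r⁻¹ := by
  have hexp : r ≤ Real.exp (∑ i ∈ s, (l i - 1)) := calc
    r ≤ ∏ i ∈ s, l i := hl
    _ ≤ ∏ i ∈ s, Real.exp (l i - 1) :=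
      prod_le_prod hl₀ fun i _ ↦ by linarith [Real.add_one_le_exp (l i - 1)]
    _ = Real.exp (∑ i ∈ s, (l i - 1)) := (Real.exp_sum _ _).symm
  have hlog := (Real.log_le_iff_le_exp hr).2 hexp
  rw [Real.log_inv]
  simp only [sum_sub_distrib] at hlog ⊢
  linarith

theorem card_filter_le_one_sub_mul_le_log_inv [Fintype ι] {l : ι → ℝ} {r : ℝ} (δ : ℝ) (hr : 0 < r)
    (hl₀ : ∀ i, 0 ≤ l i) (hl₁ : ∀ i, l i ≤ 1) (hl : r ≤ ∏ i, l i) :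
    #{i | l i ≤ 1 - δ} * δ ≤ Real.log r⁻¹ := calc
  #{i | l i ≤ 1 - δ} * δ ≤ ∑ i with l i ≤ 1 - δ, (1 - l i) := by
    rw [← nsmul_eq_mul]
    exact card_nsmul_le_sum _ _ _ fun i hi ↦ by linarith [(mem_filter.1 hi).2]
  _ ≤ ∑ i, (1 - l i) := sum_le_univ_sum_of_nonneg fun i ↦ sub_nonneg.2 (hl₁ i)
  _ ≤ Real.log r⁻¹ := sum_one_sub_le_log_inv hr (fun i _ ↦ hl₀ i) hl

/-- The loss `2 (1 - l i)` is small on long sides, which keeps the total loss independent of the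
number of factors. -/
theorem half_mul_pow_le_prod [Fintype ι] {l c : ι → ℝ} {r m : ℝ} (hr : 0 < r) (hm : 4 ≤ r * m)
    (hl₀ : ∀ i, 0 < l i) (hl₁ : ∀ i, l i ≤ 1) (hl : r ≤ ∏ i, l i)
    (hc : ∀ i, m * l i - 2 * (1 - l i) ≤ c i) :
    r / 2 * m ^ Fintype.card ι ≤ ∏ i, c i := by
  have hm₀ : 0 < m := pos_of_mul_pos_right (by linarith) hr.le
  set y : ι → ℝ := fun i ↦ 2 / m * ((l i)⁻¹ - 1) with hy
  have hy₀ (i) : 0 ≤ y i :=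
    mul_nonneg (by positivity) (sub_nonneg.2 ((one_le_inv₀ (hl₀ i)).2 (hl₁ i)))
  have hysum : ∑ i, y i ≤ 1 / 2 := calc
    ∑ i, y i = 2 / m * ∑ i, ((l i)⁻¹ - 1) := (mul_sum _ _ _).symm
    _ ≤ 2 / m * (∏ i, l i)⁻¹ := by
      gcongr
      exact sum_inv_sub_one_le_inv_prod (fun i _ ↦ hl₀ i) fun i _ ↦ hl₁ i
    _ ≤ 2 / m * r⁻¹ := by gcongr
    _ = 2 / (r * m) := by field_simp
    _ ≤ 2 / 4 := by gcongr
    _ = 1 / 2 := by norm_num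
  have hy₁ (i) : y i ≤ 1 := by
    linarith [single_le_sum (fun j _ ↦ hy₀ j) (mem_univ i)]
  have hprod : 1 / 2 ≤ ∏ i, (1 - y i) := by
    linarith [one_sub_sum_le_prod_one_sub (fun i _ ↦ hy₀ i) fun i (_ : i ∈ univ) ↦ hy₁ i]
  calc r / 2 * m ^ Fintype.card ι = r * (1 / 2) * m ^ Fintype.card ι := by ring
    _ ≤ (∏ i, l i) * (∏ i, (1 - y i)) * m ^ Fintype.card ι := by
      gcongr
      exact hr.le.trans hl
    _ = ∏ i, l i * (1 - y i) * m := by simp [prod_mul_distrib]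
    _ ≤ ∏ i, c i := by
      refine prod_le_prod (fun i _ ↦ ?_) fun i _ ↦ le_trans (le_of_eq ?_) (hc i)
      · exact mul_nonneg (mul_nonneg (hl₀ i).le (sub_nonneg.2 (hy₁ i))) hm₀.le
      · have := (hl₀ i).ne'
        simp only [hy]
        field_simp

end ProductInequalities

section RandomFunctions

variable {ι G : Type*} [Fintype ι] [Fintype G] [DecidableEq G]

theorem sum_pow_card_filter_mem {R : Type*} [CommSemiring R] (T : Finset G) (q : R) :
    ∑ f : ι → G, q ^ #{i | f i ∈ T} = (#T * q + #Tᶜ) ^ Fintype.card ι := by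
  have hpow (f : ι → G) : q ^ #{i | f i ∈ T} = ∏ i, if f i ∈ T then q else 1 := by
    simp [prod_ite]
  have hsum : ∑ g, (if g ∈ T then q else 1) = #T * q + #Tᶜ := by
    simp [sum_ite, compl_eq_univ_sdiff, filter_notMem_eq_sdiff]
  simp only [hpow, ← Fintype.prod_sum fun (_ : ι) (g : G) ↦ if g ∈ T then q else 1, hsum,
    prod_const, card_univ]

/-- Markov's inequality for `2 ^ (-#{i | f i ∈ T})`, with `f` uniformly random. -/
theorem card_filter_card_filter_mem_le {T : Finset G} {p : ℝ}
    (hT : p * Fintype.card G ≤ #T) (k : ℕ) :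
    (#{f : ι → G | #{i | f i ∈ T} ≤ k} : ℝ) ≤
      2 ^ k * Real.exp (-(Fintype.card ι * p / 2)) * Fintype.card (ι → G) := by
  have hbase : (#T * (1 / 2) + #Tᶜ : ℝ) ≤ Real.exp (-(p / 2)) * Fintype.card G := by
    have hcompl : (#T + #Tᶜ : ℝ) = Fintype.card G := mod_cast card_add_card_compl T
    have hexp : (1 - p / 2) * Fintype.card G ≤ Real.exp (-(p / 2)) * Fintype.card G := by
      gcongr
      exact Real.one_sub_le_exp_neg _
    linarith
  have hterm (f : ι → G) (hf : #{i | f i ∈ T} ≤ k) :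
      (1 : ℝ) ≤ 2 ^ k * (1 / 2) ^ #{i | f i ∈ T} := by
    rw [one_div, inv_pow, ← div_eq_mul_inv, one_le_div (by positivity)]
    exact pow_le_pow_right₀ one_le_two hf
  calc (#{f : ι → G | #{i | f i ∈ T} ≤ k} : ℝ)
      = ∑ f : ι → G with #{i | f i ∈ T} ≤ k, (1 : ℝ) := by simp
    _ ≤ ∑ f : ι → G with #{i | f i ∈ T} ≤ k, 2 ^ k * (1 / 2 : ℝ) ^ #{i | f i ∈ T} :=
      sum_le_sum fun f hf ↦ hterm f (mem_filter.1 hf).2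
    _ ≤ ∑ f : ι → G, 2 ^ k * (1 / 2 : ℝ) ^ #{i | f i ∈ T} :=
      sum_le_univ_sum_of_nonneg fun f ↦ by positivity
    _ = 2 ^ k * (#T * (1 / 2) + #Tᶜ) ^ Fintype.card ι := by
      rw [← mul_sum, sum_pow_card_filter_mem]
    _ ≤ 2 ^ k * (Real.exp (-(p / 2)) * Fintype.card G) ^ Fintype.card ι := by gcongr
    _ = 2 ^ k * Real.exp (-(Fintype.card ι * p / 2)) * Fintype.card (ι → G) := by
      rw [mul_pow, ← Real.exp_nat_mul, Fintype.card_fun, Nat.cast_pow, ← mul_assoc]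
      congr 3
      ring

theorem exists_forall_lt_card_filter_mem [Nonempty G] {𝒯 : Finset (Finset G)} {k : ℕ} {p : ℝ}
    (hdense : ∀ T ∈ 𝒯, p * Fintype.card G ≤ #T)
    (hcard : #𝒯 * 2 ^ k * Real.exp (-(Fintype.card ι * p / 2)) < 1) :
    ∃ f : ι → G, ∀ T ∈ 𝒯, k < #{i | f i ∈ T} := by
  set bad : Finset G → Finset (ι → G) := fun T ↦ {f | #{i | f i ∈ T} ≤ k}
  have hbad : (#(𝒯.biUnion bad) : ℝ) < #(univ : Finset (ι → G)) := calc
    (#(𝒯.biUnion bad) : ℝ) ≤ ∑ T ∈ 𝒯, (#(bad T) : ℝ) := mod_cast card_biUnion_le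
    _ ≤ ∑ _T ∈ 𝒯, 2 ^ k * Real.exp (-(Fintype.card ι * p / 2)) * Fintype.card (ι → G) :=
      sum_le_sum fun T hT ↦ card_filter_card_filter_mem_le (hdense T hT) k
    _ = #𝒯 * 2 ^ k * Real.exp (-(Fintype.card ι * p / 2)) * Fintype.card (ι → G) := by
      rw [sum_const, nsmul_eq_mul]
      ring
    _ < #(univ : Finset (ι → G)) := mul_lt_of_lt_one_left (mod_cast Fintype.card_pos) hcard
  obtain ⟨f, -, hf⟩ := exists_mem_notMem_of_card_lt_card (Nat.cast_lt.1 hbad)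
  refine ⟨f, fun T hT ↦ not_le.1 fun hk ↦ hf ?_⟩
  exact mem_biUnion.2 ⟨T, hT, mem_filter.2 ⟨mem_univ _, hk⟩⟩

end RandomFunctions

section InnerCells

variable {M : ℕ} {a b : ℝ}

/-- The cells of the grid of mesh `1 / (M + 2)` that lie in `[a, b]`, the two cells at the ends
of `[0, 1]` excluded: `c : Fin M` stands for `[(c + 1) / (M + 2), (c + 2) / (M + 2)]`. -/
def innerCells (M : ℕ) (a b : ℝ) : Finset (Fin M) :=
  {c | a * (M + 2) ≤ c + 1 ∧ (c + 2 : ℝ) ≤ b * (M + 2)}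

theorem mem_innerCells {c : Fin M} :
    c ∈ innerCells M a b ↔ a * (M + 2) ≤ c + 1 ∧ (c + 2 : ℝ) ≤ b * (M + 2) := by
  simp [innerCells]

theorem innerCells_ceil_floor (M : ℕ) (a b : ℝ) :
    innerCells M (⌈a * (M + 2)⌉₊ / (M + 2)) (⌊b * (M + 2)⌋₊ / (M + 2)) = innerCells M a b := by
  have hM : (M + 2 : ℝ) ≠ 0 := by positivity
  ext c
  have hceil : ⌈a * (M + 2)⌉₊ ≤ c + 1 ↔ a * (M + 2) ≤ c + 1 := by
    rw [Nat.ceil_le]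
    push_cast
    rfl
  have hfloor : c + 2 ≤ ⌊b * (M + 2)⌋₊ ↔ (c + 2 : ℝ) ≤ b * (M + 2) := by
    rw [Nat.le_floor_iff' (by omega)]
    push_cast
    rfl
  rw [mem_innerCells, mem_innerCells, div_mul_cancel₀ _ hM, div_mul_cancel₀ _ hM, ← hceil,
    ← hfloor]
  norm_cast

theorem innerCells_eq_univ (ha : 0 ≤ a) (hb : b ≤ 1) (hab : 1 - 1 / (M + 2) < b - a) :
    innerCells M a b = univ := by
  have hM : (0 : ℝ) < M + 2 := by positivity
  have hlen : M + 1 < b * (M + 2) - a * (M + 2) := by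
    have := mul_lt_mul_of_pos_right hab hM
    rw [sub_mul, div_mul_cancel₀ _ hM.ne'] at this
    linarith
  refine eq_univ_of_forall fun c ↦ mem_innerCells.2 ?_
  have hc : (c + 1 : ℝ) ≤ M := mod_cast c.2
  have ha' : 0 ≤ a * (M + 2) := by positivity
  have hb' : b * (M + 2) ≤ M + 2 := mul_le_of_le_one_left hM.le hb
  constructor <;> linarith

theorem card_filter_val_add_one_lt_le {x : ℝ} (hx : 0 ≤ x) :
    (#{c : Fin M | (c + 1 : ℝ) < x} : ℝ) ≤ x := by
  have hsub : ({c | (c + 1 : ℝ) < x} : Finset (Fin M)) ⊆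
      ({c | (c : ℕ) < ⌊x⌋₊} : Finset (Fin M)) := by
    refine monotone_filter_right _ fun c _ hc ↦ Nat.lt_of_succ_le (Nat.le_floor ?_)
    exact_mod_cast hc.le
  calc (#{c : Fin M | (c + 1 : ℝ) < x} : ℝ) ≤ #{c : Fin M | (c : ℕ) < ⌊x⌋₊} :=
        Nat.cast_le.2 (card_le_card hsub)
    _ ≤ ⌊x⌋₊ := mod_cast Fin.card_filter_val_lt.trans_le (min_le_right _ _)
    _ ≤ x := Nat.floor_le hx

theorem le_card_innerCells (ha : 0 ≤ a) (hb : b ≤ 1) :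
    M * (b - a) - 2 * (1 - (b - a)) ≤ #(innerCells M a b) := by
  set left : Finset (Fin M) := {c | (c + 1 : ℝ) < a * (M + 2)}
  set right : Finset (Fin M) := {c | (c + 1 : ℝ) < (1 - b) * (M + 2)}
  have hcover : (univ : Finset (Fin M)) ⊆
      innerCells M a b ∪ (left ∪ right.map Fin.revPerm.toEmbedding) := by
    intro c _
    have hrev : (c.rev : ℝ) = M - (c + 1) := by
      rw [Fin.val_rev, Nat.cast_sub c.2]
      push_cast
      rfl
    simp only [mem_union, mem_innerCells, left, right, mem_filter, mem_univ, true_and,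
      mem_map_equiv, Fin.revPerm_symm, Fin.revPerm_apply, hrev]
    by_contra! h
    linarith [h.1 h.2.1, h.2.2]
  have hcard : M ≤ #(innerCells M a b) + (#left + #right) := by
    have h := card_le_card hcover
    rw [card_univ, Fintype.card_fin] at h
    have h₁ := card_union_le (innerCells M a b) (left ∪ right.map Fin.revPerm.toEmbedding)
    have h₂ := card_union_le left (right.map Fin.revPerm.toEmbedding)
    rw [card_map] at h₂
    omega
  have hcardR : (M : ℝ) ≤ #(innerCells M a b) + (#left + #right) := mod_cast hcard
  have hleft : (#left : ℝ) ≤ a * (M + 2) := card_filter_val_add_one_lt_le (by positivity)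
  have hright : (#right : ℝ) ≤ (1 - b) * (M + 2) :=
    card_filter_val_add_one_lt_le (mul_nonneg (sub_nonneg.2 hb) (by positivity))
  linarith

end InnerCells

theorem exists_subset_range_of_card_le {ι : Type*} [Nonempty ι] {S : Finset ι} {A : ℕ}
    (hS : #S ≤ A) : ∃ e : Fin A → ι, ∀ i ∈ S, i ∈ Set.range e := by
  obtain ⟨g⟩ : Nonempty (S ↪ Fin A) := Function.Embedding.nonempty_of_card_le (by simpa)
  exact ⟨Function.extend g (↑) fun _ ↦ Classical.arbitrary ι,
    fun i hi ↦ ⟨g ⟨i, hi⟩, g.injective.extend_apply _ _ _⟩⟩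

section InnerBoxes

variable {ι : Type*} [Fintype ι] [DecidableEq ι] {M A : ℕ} {a b : ι → ℝ} {r : ℝ}

/-- The inner grid cells of the cube that lie in the box `∏ i, [a i, b i]`. -/
def innerBox (M : ℕ) (a b : ι → ℝ) : Finset (ι → Fin M) :=
  Fintype.piFinset fun i ↦ innerCells M (a i) (b i)

theorem half_mul_card_le_card_innerBox (hr : 0 < r) (hM : 4 ≤ r * M) (ha : ∀ i, 0 ≤ a i)
    (hab : ∀ i, a i ≤ b i) (hb : ∀ i, b i ≤ 1) (hvol : r ≤ ∏ i, (b i - a i)) :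
    r / 2 * Fintype.card (ι → Fin M) ≤ #(innerBox M a b) := by
  have hpos (i) : 0 < b i - a i := by
    refine (sub_nonneg.2 (hab i)).lt_of_ne' fun h ↦ ?_
    exact (hr.trans_le hvol).ne' (prod_eq_zero (mem_univ i) h)
  rw [innerBox, Fintype.card_piFinset, Fintype.card_fun, Fintype.card_fin]
  push_cast
  exact half_mul_pow_le_prod hr hM hpos (fun i ↦ by linarith [ha i, hb i]) hvol
    fun i ↦ le_card_innerCells (ha i) (hb i)

/-- The cells of `M ^ ι` cut out by `A` conditions, each of which places one coordinate in an
interval whose endpoints are grid points. Conditions may be repeated. -/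
def sparseBoxes (ι : Type*) [Fintype ι] (M A : ℕ) : Finset (Finset (ι → Fin M)) :=
  univ.image fun s : Fin A → ι × Fin (M + 3) × Fin (M + 3) ↦
    ({c | ∀ j, c (s j).1 ∈ innerCells M ((s j).2.1 / (M + 2)) ((s j).2.2 / (M + 2))} :
      Finset (ι → Fin M))

theorem card_sparseBoxes_le (ι : Type*) [Fintype ι] (M A : ℕ) :
    #(sparseBoxes ι M A) ≤ (Fintype.card ι * (M + 3) ^ 2) ^ A :=
  card_image_le.trans_eq (by simp [sq])

theorem innerBox_mem_sparseBoxes [Nonempty ι] (hr : 0 < r) (hA : (M + 2) * Real.log r⁻¹ ≤ A)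
    (ha : ∀ i, 0 ≤ a i) (hab : ∀ i, a i ≤ b i) (hb : ∀ i, b i ≤ 1)
    (hvol : r ≤ ∏ i, (b i - a i)) : innerBox M a b ∈ sparseBoxes ι M A := by
  have hM : (0 : ℝ) < M + 2 := by positivity
  have hshort : #{i | b i - a i ≤ 1 - 1 / (M + 2)} ≤ A := by
    have h := card_filter_le_one_sub_mul_le_log_inv (1 / (M + 2)) hr (fun i ↦ sub_nonneg.2 (hab i))
      (fun i ↦ by linarith [ha i, hb i]) hvol
    rw [mul_one_div, div_le_iff₀' hM] at h
    exact_mod_cast h.trans hA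
  obtain ⟨e, he⟩ := exists_subset_range_of_card_le hshort
  have hceil (i) : ⌈a i * (M + 2)⌉₊ < M + 3 := by
    refine Nat.lt_succ_of_le (Nat.ceil_le.2 ?_)
    push_cast
    exact mul_le_of_le_one_left hM.le ((hab i).trans (hb i))
  have hfloor (i) : ⌊b i * (M + 2)⌋₊ < M + 3 := by
    refine Nat.lt_succ_of_le (Nat.floor_le_of_le ?_)
    push_cast
    exact mul_le_of_le_one_left hM.le (hb i)
  refine mem_image.2 ⟨fun j ↦ (e j, ⟨_, hceil (e j)⟩, ⟨_, hfloor (e j)⟩), mem_univ _, ?_⟩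
  ext c
  simp only [innerCells_ceil_floor, mem_filter, mem_univ, true_and, innerBox, Fintype.mem_piFinset]
  refine ⟨fun hc i ↦ ?_, fun hc j ↦ hc (e j)⟩
  by_cases hi : b i - a i ≤ 1 - 1 / (M + 2)
  · obtain ⟨j, rfl⟩ := he i (by simpa using hi)
    exact hc j
  · rw [innerCells_eq_univ (ha i) (hb i) (not_le.1 hi)]
    exact mem_univ _

theorem exists_forall_lt_card_filter_mem_innerBox [Nonempty ι] {κ : Type*} [Fintype κ] {k : ℕ}
    (hr : 0 < r) (hM : 4 ≤ r * M) (hA : (M + 2) * Real.log r⁻¹ ≤ A)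
    (hcard : #(sparseBoxes ι M A) * 2 ^ k * Real.exp (-(Fintype.card κ * r / 4)) < 1) :
    ∃ f : κ → ι → Fin M, ∀ a b : ι → ℝ, (∀ i, 0 ≤ a i) → (∀ i, a i ≤ b i) → (∀ i, b i ≤ 1) →
      r ≤ ∏ i, (b i - a i) → k < #{j | f j ∈ innerBox M a b} := by
  have : Nonempty (Fin M) := ⟨⟨0, Nat.pos_of_ne_zero fun h ↦ by simp [h] at hM; linarith⟩⟩
  set 𝒯 := {T ∈ sparseBoxes ι M A | r / 2 * Fintype.card (ι → Fin M) ≤ #T}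
  obtain ⟨f, hf⟩ : ∃ f : κ → ι → Fin M, ∀ T ∈ 𝒯, k < #{j | f j ∈ T} := by
    refine exists_forall_lt_card_filter_mem (p := r / 2) (fun T hT ↦ (mem_filter.1 hT).2)
      (lt_of_le_of_lt ?_ hcard)
    rw [show Fintype.card κ * (r / 2) / 2 = Fintype.card κ * r / 4 by ring]
    gcongr
    exact filter_subset _ _
  exact ⟨f, fun a b ha hab hb hvol ↦ hf _ <| mem_filter.2
    ⟨innerBox_mem_sparseBoxes hr hA ha hab hb hvol,
      half_mul_card_le_card_innerBox hr hM ha hab hb hvol⟩⟩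

end InnerBoxes

section GridPoints

variable {ι : Type*} {M : ℕ} {t t' : ℝ}

/-- The point at relative position `(t, …, t)` in the cell `c` of the grid of mesh `1 / (M + 2)`;
distinct values of `t` give distinct points. Cells are indexed as in `innerCells`. -/
def gridPoint (c : ι → Fin M) (t : ℝ) : ι → ℝ :=
  fun i ↦ (c i + 1 + t) / (M + 2)

theorem gridPoint_mem_Icc (c : ι → Fin M) (ht : t ∈ Set.Ioo 0 1) (i : ι) :
    gridPoint c t i ∈ Set.Icc (0 : ℝ) 1 := by
  have hc : (c i + 1 : ℝ) ≤ M := mod_cast (c i).2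
  have ht₀ := ht.1
  refine ⟨by unfold gridPoint; positivity, (div_le_one (by positivity)).2 ?_⟩
  linarith [ht.2]

theorem gridPoint_mem_Ioo [Fintype ι] [DecidableEq ι] {c : ι → Fin M} {a b : ι → ℝ}
    (hc : c ∈ innerBox M a b) (ht : t ∈ Set.Ioo 0 1) (i : ι) :
    gridPoint c t i ∈ Set.Ioo (a i) (b i) := by
  obtain ⟨hca, hcb⟩ := mem_innerCells.1 (Fintype.mem_piFinset.1 hc i)
  constructor
  · exact (lt_div_iff₀ (by positivity)).2 (by linarith [ht.1])
  · exact (div_lt_iff₀ (by positivity)).2 (by linarith [ht.2])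

theorem fract_gridPoint (c : ι → Fin M) (ht : t ∈ Set.Ioo 0 1) (i : ι) :
    Int.fract (gridPoint c t i * (M + 2)) = t := by
  rw [gridPoint, div_mul_cancel₀ _ (by positivity), ← Nat.cast_add_one, Int.fract_natCast_add]
  exact Int.fract_eq_self.2 ⟨ht.1.le, ht.2⟩

theorem gridPoint_injective [Nonempty ι] {κ : Type*} (f : κ → ι → Fin M) {t : κ → ℝ}
    (ht : ∀ j, t j ∈ Set.Ioo 0 1) (hinj : t.Injective) :
    (fun j ↦ gridPoint (f j) (t j)).Injective := by
  intro j j' h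
  let i := Classical.arbitrary ι
  apply hinj
  rw [← fract_gridPoint (f j) (ht j) i, ← fract_gridPoint (f j') (ht j') i]
  exact congrArg (fun x : ι → ℝ ↦ Int.fract (x i * (M + 2))) h

end GridPoints

section Dispersion

variable {d k n : ℕ}

theorem kdisp_nonneg (d k : ℕ) (P : Finset (Fin d → ℝ)) : 0 ≤ kdisp d k P := by
  apply Real.sSup_nonneg
  rintro v ⟨a, b, hab, -, rfl⟩
  exact prod_nonneg fun i _ ↦ sub_nonneg.2 (hab i).2.1

theorem kdisp_le {P : Finset (Fin d → ℝ)} {r : ℝ} (hr : 0 ≤ r)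
    (hP : ∀ a b : Fin d → ℝ, (∀ i, 0 ≤ a i) → (∀ i, a i ≤ b i) → (∀ i, b i ≤ 1) →
      r < ∏ i, (b i - a i) → k < #{x ∈ P | ∀ i, x i ∈ Set.Ioo (a i) (b i)}) :
    kdisp d k P ≤ r := by
  refine Real.sSup_le ?_ hr
  rintro v ⟨a, b, hab, hcard, rfl⟩
  by_contra! hv
  exact hcard.not_gt
    (hP a b (fun i ↦ (hab i).1) (fun i ↦ (hab i).2.1) (fun i ↦ (hab i).2.2) hv)

theorem kdisp_le_one (d k : ℕ) (P : Finset (Fin d → ℝ)) : kdisp d k P ≤ 1 :=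
  kdisp_le zero_le_one fun _ _ ha hab hb hvol ↦ absurd hvol <| not_lt.2 <|
    prod_le_one (fun i _ ↦ sub_nonneg.2 (hab i)) fun i _ ↦ by linarith [ha i, hb i]

theorem kdispStar_le_kdisp {P : Finset (Fin d → ℝ)} (hP : ∀ x ∈ P, ∀ i, x i ∈ Set.Icc (0 : ℝ) 1)
    (hn : #P = n) : kdispStar d k n ≤ kdisp d k P := by
  refine csInf_le ⟨0, ?_⟩ ⟨P, hP, hn, rfl⟩
  rintro v ⟨Q, -, -, rfl⟩
  exact kdisp_nonneg d k Q

theorem kdispStar_le_one (d k n : ℕ) : kdispStar d k n ≤ 1 := by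
  by_cases h : ∃ P : Finset (Fin d → ℝ), (∀ x ∈ P, ∀ i, x i ∈ Set.Icc (0 : ℝ) 1) ∧ #P = n
  · obtain ⟨P, hP, hn⟩ := h
    exact (kdispStar_le_kdisp hP hn).trans (kdisp_le_one d k P)
  · refine (Real.sInf_nonpos ?_).trans zero_le_one
    rintro v ⟨P, hP, hn, -⟩
    exact absurd ⟨P, hP, hn⟩ h

theorem kdispStar_le_of_card_sparseBoxes {M A : ℕ} {r : ℝ} (hd : 0 < d) (hr : 0 < r)
    (hM : 4 ≤ r * M) (hA : (M + 2) * Real.log r⁻¹ ≤ A)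
    (hcard : #(sparseBoxes (Fin d) M A) * 2 ^ k * Real.exp (-(n * r / 4)) < 1) :
    kdispStar d k n ≤ r := by
  have : Nonempty (Fin d) := ⟨⟨0, hd⟩⟩
  obtain ⟨f, hf⟩ := exists_forall_lt_card_filter_mem_innerBox (κ := Fin n) hr hM hA
    (by rwa [Fintype.card_fin])
  let τ := (Set.Ioo_infinite (zero_lt_one (α := ℝ))).natEmbedding
  let x : Fin n → Fin d → ℝ := fun j ↦ gridPoint (f j) (τ j)
  have hx : x.Injective := gridPoint_injective f (fun j ↦ (τ j).2)
    (Subtype.val_injective.comp (τ.injective.comp Fin.val_injective))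
  have hxcube : ∀ y ∈ univ.image x, ∀ i, y i ∈ Set.Icc (0 : ℝ) 1 :=
    forall_mem_image.2 fun j _ ↦ gridPoint_mem_Icc (f j) (τ j).2
  refine (kdispStar_le_kdisp hxcube (by simp [card_image_of_injective _ hx])).trans ?_
  refine kdisp_le hr.le fun a b ha hab hb hvol ↦ ?_
  calc k < #{j | f j ∈ innerBox M a b} := hf a b ha hab hb hvol.le
    _ = #(image x {j | f j ∈ innerBox M a b}) := (card_image_of_injective _ hx).symm
    _ ≤ #{y ∈ univ.image x | ∀ i, y i ∈ Set.Ioo (a i) (b i)} := by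
      refine card_le_card (image_subset_iff.2 fun j hj ↦ mem_filter.2 ⟨?_, ?_⟩)
      · exact mem_image_of_mem _ (mem_univ _)
      · exact gridPoint_mem_Ioo (mem_filter.1 hj).2 (τ j).2

end Dispersion

section Parameters

theorem log_le_logb_two {x : ℝ} (hx : 1 ≤ x) : Real.log x ≤ Real.logb 2 x :=
  le_div_self (Real.log_nonneg hx) (Real.log_pos one_lt_two)
    (Real.log_two_lt_d9.le.trans (by norm_num))

theorem one_le_logb_two {x : ℝ} (hx : 2 ≤ x) : 1 ≤ Real.logb 2 x := by
  rw [Real.le_logb_iff_rpow_le one_lt_two (by linarith), Real.rpow_one]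
  exact hx

theorem pow_mul_two_pow_mul_exp_lt_one {d n k A : ℕ} {r x : ℝ} (hd : 2 ≤ d) (hn : 2 ≤ n)
    (hr : 0 < r) (hk : 16 * k ≤ r * n)
    (hsq : 256 * Real.logb 2 n ^ 2 * Real.logb 2 d ≤ r ^ 2 * n)
    (hA : r * A ≤ 8 * Real.logb 2 n) (hx₀ : 0 ≤ x) (hx : x ≤ n) :
    (d * x) ^ A * 2 ^ k * Real.exp (-(n * r / 4)) < 1 := by
  have hdR : (2 : ℝ) ≤ d := mod_cast hd
  have hnR : (2 : ℝ) ≤ n := mod_cast hn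
  have hD := one_le_logb_two hdR
  have hL := one_le_logb_two hnR
  set D := Real.logb 2 d
  set L := Real.logb 2 n
  have hbase : d * x ≤ Real.exp (2 * D * L) := calc
    d * x ≤ d * n := by gcongr
    _ = Real.exp (Real.log d + Real.log n) := by
      rw [Real.exp_add, Real.exp_log (by linarith), Real.exp_log (by linarith)]
    _ ≤ Real.exp (D + L) := by
      gcongr <;> exact log_le_logb_two (by linarith)
    _ ≤ Real.exp (2 * D * L) := by
      gcongr
      nlinarith
  have hexponent : A * (2 * D * L) ≤ n * r / 16 := by
    refine le_of_mul_le_mul_left ?_ hr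
    calc r * (A * (2 * D * L)) = r * A * (2 * D * L) := by ring
      _ ≤ 8 * L * (2 * D * L) := by gcongr
      _ ≤ r * (n * r / 16) := by linarith
  calc (d * x) ^ A * 2 ^ k * Real.exp (-(n * r / 4))
      ≤ Real.exp (2 * D * L) ^ A * Real.exp 1 ^ k * Real.exp (-(n * r / 4)) := by
        gcongr
        linarith [Real.exp_one_gt_d9]
    _ = Real.exp (A * (2 * D * L) + k - n * r / 4) := by
      rw [← Real.exp_nat_mul, ← Real.exp_nat_mul, ← Real.exp_add, ← Real.exp_add]
      congr 1
      ring
    _ < 1 := by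
      rw [Real.exp_lt_one_iff]
      have : 0 < r * n := by positivity
      linarith

theorem kdispStar_le_of_le_mul_of_le_sq_mul {d k n : ℕ} {r : ℝ} (hd : 2 ≤ d) (hn : 2 ≤ n)
    (hr₀ : 0 < r) (hr₁ : r ≤ 1) (hk : 16 * k ≤ r * n)
    (hsq : 256 * Real.logb 2 n ^ 2 * Real.logb 2 d ≤ r ^ 2 * n) :
    kdispStar d k n ≤ r := by
  have hD : 1 ≤ Real.logb 2 d := one_le_logb_two (mod_cast hd)
  have hL : 1 ≤ Real.logb 2 n := one_le_logb_two (mod_cast hn)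
  have hrn : 256 ≤ r ^ 2 * n := by
    linarith [one_le_mul_of_one_le_of_one_le (one_le_pow₀ hL (n := 2)) hD]
  set M := ⌈4 / r⌉₊
  have hM : 4 ≤ r * M := (div_le_iff₀' hr₀).1 (Nat.le_ceil _)
  have hM' : r * M ≤ 5 := by
    have h : r * M ≤ r * (4 / r + 1) := by
      gcongr
      exact (Nat.ceil_lt_add_one (by positivity)).le
    rw [mul_add, mul_div_cancel₀ _ hr₀.ne'] at h
    linarith
  have hMn : ((M : ℝ) + 3) ^ 2 ≤ n := by
    refine le_of_mul_le_mul_left (a := r ^ 2) ?_ (by positivity)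
    calc r ^ 2 * ((M : ℝ) + 3) ^ 2 = (r * M + 3 * r) ^ 2 := by ring
      _ ≤ (5 + 3 * 1) ^ 2 := by gcongr
      _ ≤ r ^ 2 * n := by linarith
  set A := ⌈(M + 2) * Real.logb 2 n⌉₊
  have hA : (M + 2) * Real.log r⁻¹ ≤ A := by
    have hinv : r⁻¹ ≤ n := (inv_le_iff_one_le_mul₀' hr₀).2 (by nlinarith)
    refine le_trans ?_ (Nat.le_ceil _)
    gcongr
    exact (Real.log_le_log (by positivity) hinv).trans
      (log_le_logb_two (mod_cast one_le_two.trans hn))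
  have hA' : r * A ≤ 8 * Real.logb 2 n := by
    have h : r * A ≤ r * ((M + 2) * Real.logb 2 n + 1) := by
      gcongr
      exact (Nat.ceil_lt_add_one (by positivity)).le
    nlinarith
  refine kdispStar_le_of_card_sparseBoxes (by omega) hr₀ hM hA (lt_of_le_of_lt ?_
    (pow_mul_two_pow_mul_exp_lt_one hd hn hr₀ hk hsq hA' (by positivity) hMn))
  gcongr
  have h := card_sparseBoxes_le (Fin d) M A
  rw [Fintype.card_fin] at h
  exact_mod_cast h

end Parameters

theorem statement_0_general {d n : ℕ} (k : ℕ) (hd : 2 ≤ d) (hn : 2 ≤ n) :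
    kdispStar d k n ≤ 16 * max (Real.logb 2 n * √(Real.logb 2 d / n)) (k / n) := by
  set r := 16 * max (Real.logb 2 n * √(Real.logb 2 d / n)) (k / n) with hr
  rcases le_total 1 r with hr₁ | hr₁
  · exact (kdispStar_le_one d k n).trans hr₁
  have hn₀ : (0 : ℝ) < n := by positivity
  have hD : 1 ≤ Real.logb 2 d := one_le_logb_two (mod_cast hd)
  have hL : 1 ≤ Real.logb 2 n := one_le_logb_two (mod_cast hn)
  have hrad : 16 * (Real.logb 2 n * √(Real.logb 2 d / n)) ≤ r := by
    rw [hr]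
    gcongr
    exact le_max_left _ _
  refine kdispStar_le_of_le_mul_of_le_sq_mul hd hn (lt_of_lt_of_le (by positivity) hrad) hr₁ ?_ ?_
  · rw [← div_le_iff₀ hn₀, mul_div_assoc, hr]
    gcongr
    exact le_max_right _ _
  · rw [← div_le_iff₀ hn₀]
    refine le_of_eq_of_le ?_ (pow_le_pow_left₀ (by positivity) hrad 2)
    rw [mul_pow, mul_pow, Real.sq_sqrt (by positivity)]
    ring

/-- **Theorem A.** There exists a constant `C > 0` such that for any `d ≥ 2` and all
`k, n ∈ ℕ` with `k < n/2`,
`k-disp*(n,d) ≤ C · max{ log₂(n) · √(log₂(d)/n), k · log₂(n/k)/n }`. -/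
theorem statement_0 :
    ∃ C : ℝ, 0 < C ∧ ∀ d k n : ℕ, 2 ≤ d → 1 ≤ k → 2 * k < n →
      kdispStar d k n ≤
        C * max (Real.logb 2 n * Real.sqrt (Real.logb 2 d / n))
          ((k : ℝ) * Real.logb 2 ((n : ℝ) / (k : ℝ)) / n) := by
  refine ⟨16, by norm_num, fun d k n hd hk hkn ↦
    (statement_0_general k hd (by omega)).trans ?_⟩
  have hlog : 1 ≤ Real.logb 2 (n / k) := one_le_logb_two <| by
    rw [le_div_iff₀ (mod_cast hk)]
    exact_mod_cast hkn.le
  gcongr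
  exact le_mul_of_one_le_right k.cast_nonneg hlog
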